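/- There exists a constant c > 0 such that for every integer k ≥ 1: (i) {(x_{k+3,0} + x_{k,0})·ξ^j} ≤ c/X_k for j = 0, 1, 2, 3; (ii) {(x_{k+6,0} − x_{k,0})·ξ^j} ≤ c/X_k for j = 0, 1, 2, 3, 4, 5. -/

import Mathlib

open Polynomial Filter

noncomputable def gold : ℝ := (1 + Real.sqrt 5) / 2

def Mmat (k : ℕ) : Matrix (Fin 2) (Fin 2) ℤ := !![3, (-1)^k; (-1)^(k+1), 0]

noncomputable def Xnorm (x : ℕ → Matrix (Fin 2) (Fin 2) ℤ) (k : ℕ) : ℝ :=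
  max |(x k 0 0 : ℝ)| (max |(x k 0 1 : ℝ)| |(x k 1 1 : ℝ)|)

def MarkoffSeq (ξ : ℝ) (x : ℕ → Matrix (Fin 2) (Fin 2) ℤ) : Prop :=
  (∀ k, 1 ≤ k → x k 0 1 = x k 1 0) ∧
  (∀ k, 1 ≤ k → (x k).det = 1) ∧
  ∃ c₁ c₂ c₃ : ℝ, 0 < c₁ ∧ 0 < c₂ ∧ 0 < c₃ ∧ ∀ k, 1 ≤ k →
    (c₁ * Xnorm x k ^ gold ≤ Xnorm x (k+1) ∧ Xnorm x (k+1) ≤ c₂ * Xnorm x k ^ gold) ∧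
    (|(x k 0 0 : ℝ) * ξ - (x k 0 1 : ℝ)| ≤ c₃ / Xnorm x k ∧
     |(x k 0 1 : ℝ) * ξ - (x k 1 1 : ℝ)| ≤ c₃ / Xnorm x k) ∧
    (x (k+2) = x (k+1) * Mmat (k+1) * x k ∧ x (k+2) = x k * Mmat k * x (k+1)) ∧
    (Xnorm x k < Xnorm x (k+1) ∧ Xnorm x k < (1 + ξ^2) * |(x k 0 0 : ℝ)|)

def polyNorm (P : Polynomial ℤ) : ℕ := P.support.sup fun i => (P.coeff i).natAbs

noncomputable def distInt (η : ℝ) : ℝ := |η - round η|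

noncomputable def ratHeight (α : ℚ) : ℝ := max |(α.num : ℝ)| (α.den : ℝ)

def IsMinIntPoly (α : ℂ) (P : Polynomial ℤ) : Prop :=
  P ≠ 0 ∧ Polynomial.aeval α P = 0 ∧ P.content = 1 ∧ 0 < P.leadingCoeff ∧
  ∀ Q : Polynomial ℤ, Q ≠ 0 → Polynomial.aeval α Q = 0 → P.degree ≤ Q.degree

noncomputable def Qpoly (x : ℕ → Matrix (Fin 2) (Fin 2) ℤ) (k : ℕ) : Polynomial ℤ :=
  Polynomial.C (x k 0 1 * x (k+1) 1 1 - x k 1 1 * x (k+1) 0 1)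
  - Polynomial.C (x k 0 0 * x (k+1) 1 1 - x k 1 1 * x (k+1) 0 0) * Polynomial.X
  + Polynomial.C (x k 0 0 * x (k+1) 0 1 - x k 0 1 * x (k+1) 0 0) * Polynomial.X ^ 2

/-!
Write `x_k` as `((a_k, b_k), (b_k, c_k))`. It is `a_k (1, ξ, ξ²)` up to `O(1 / X_k)`, and we compute
modulo integers and `O(1 / X_k)`. Then `a_k ξ^j ≡ 0` for `j ≤ 2`, and since `X_k X_{k+1}` is
`O(X_{k+2})`, also `u b_{k+2} ξ ≡ u c_{k+2} ≡ 0` whenever `u` is an entry of `x_k` or `x_{k+1}`.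
Cayley–Hamilton turns the product formulas into `x_{k+3} + x_k = 3 a_{k+1} x_{k+2}`, whence
`(a_{k+3} + a_k) ξ³ ≡ (c_{k+3} + c_k) ξ = 3 a_{k+1} c_{k+2} ξ`; this is `≡ 0` because
`a_{k+1} c_{k+2} = b_{k+1} b_{k+2} + (-1)^k b_k`, an entry of `x_{k+2} x_{k+1}⁻¹ = x_k M_k`.

One power of `ξ` further, the same manipulations give `(a_{k+3} + a_k) ξ⁴ ≡ 6 (-1)^k c_k ξ`. The
sign alternates when `k` grows by `3`, so the obstruction in `(a_{k+6} - a_k) ξ⁴` becomes a multiple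
of `(c_{k+3} + c_k) ξ ≡ 0`. The integer close to `(a_{k+6} - a_k) ξ⁴` is again close to an integer
after multiplication by `ξ`: the recurrence and the product formulas express
`c_{k+4} c_{k+5} - c_{k+1} c_{k+2} + 6 c_{k+3}` through products `u b_{k+4}` as above and through
`c_{k+3} (b_{k+4}² - b_{k+2}²)`.
-/

open Asymptotics
open scoped goldenRatio

theorem neg_one_pow_mul_self {R : Type*} [Ring R] (k : ℕ) : (-1 : R) ^ k * (-1) ^ k = 1 := by
  rw [← pow_add, Even.neg_one_pow ⟨k, rfl⟩]

section Matrix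

variable {R : Type*} [CommRing R]

theorem mul_adjugate_of_eq_mul {n : Type*} [Fintype n] [DecidableEq n] {A B C : Matrix n n R}
    (hB : B.det = 1) (h : C = A * B) : C * B.adjugate = A := by
  rw [h, mul_assoc, Matrix.mul_adjugate, hB, one_smul, mul_one]

theorem mul_self_add_one_of_det_eq_one {W : Matrix (Fin 2) (Fin 2) R} (hW : W.det = 1) :
    W * W + 1 = W.trace • W := by
  nontriviality R
  have cayleyHamilton := W.aeval_self_charpoly
  rw [W.charpoly_fin_two, hW] at cayleyHamilton
  rw [← sub_eq_zero, ← cayleyHamilton]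
  simp only [map_add, map_sub, map_mul, Polynomial.aeval_X, Polynomial.aeval_C,
    Algebra.algebraMap_eq_smul_one, smul_one_mul, pow_two, map_one]
  abel

end Matrix

theorem det_Mmat (k : ℕ) : (Mmat k).det = 1 := by
  rw [Mmat, Matrix.det_fin_two_of, pow_succ]
  linear_combination neg_one_pow_mul_self (R := ℤ) k

theorem trace_mul_Mmat {A : Matrix (Fin 2) (Fin 2) ℤ} (hA : A 0 1 = A 1 0) (k : ℕ) :
    (A * Mmat k).trace = 3 * A 0 0 := by
  simp only [Mmat, Matrix.trace_fin_two, Matrix.mul_apply, Fin.sum_univ_two, Matrix.of_apply,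
    Matrix.cons_val, ← hA, pow_succ]
  ring

/-- The algebraic part of `MarkoffSeq`: symmetric matrices of determinant one with both product
formulas. -/
structure MarkoffRecurrence (x : ℕ → Matrix (Fin 2) (Fin 2) ℤ) : Prop where
  symm : ∀ k, 1 ≤ k → x k 0 1 = x k 1 0
  det : ∀ k, 1 ≤ k → (x k).det = 1
  succ_mul : ∀ k, 1 ≤ k → x (k + 2) = x (k + 1) * Mmat (k + 1) * x k
  mul_succ : ∀ k, 1 ≤ k → x (k + 2) = x k * Mmat k * x (k + 1)

namespace MarkoffRecurrence

variable {x : ℕ → Matrix (Fin 2) (Fin 2) ℤ} {k : ℕ}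

theorem upper_mul_lower (h : MarkoffRecurrence x) (hk : 1 ≤ k) :
    x k 0 0 * x k 1 1 = x k 0 1 ^ 2 + 1 := by
  have hdet := h.det k hk
  rw [Matrix.det_fin_two, ← h.symm k hk] at hdet
  linear_combination hdet

theorem add_three (h : MarkoffRecurrence x) (hk : 1 ≤ k) :
    x (k + 3) + x k = (3 * x (k + 1) 0 0) • x (k + 2) := by
  let W := x (k + 1) * Mmat (k + 1)
  have hdet : W.det = 1 := by rw [Matrix.det_mul, h.det _ (by lia), det_Mmat, one_mul]
  have htrace : W.trace = 3 * x (k + 1) 0 0 := trace_mul_Mmat (h.symm _ (by lia)) _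
  calc x (k + 3) + x k
      = W * x (k + 2) + x k := by rw [h.mul_succ (k + 1) (by lia)]
    _ = (W * W + 1) * x k := by rw [h.succ_mul k hk, add_mul, one_mul, mul_assoc W W]
    _ = W.trace • (W * x k) := by rw [mul_self_add_one_of_det_eq_one hdet, Matrix.smul_mul]
    _ = (3 * x (k + 1) 0 0) • x (k + 2) := by rw [htrace, h.succ_mul k hk]

theorem add_three_apply (h : MarkoffRecurrence x) (hk : 1 ≤ k) (i j : Fin 2) :
    x (k + 3) i j + x k i j = 3 * x (k + 1) 0 0 * x (k + 2) i j :=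
  congrFun₂ (h.add_three hk) i j

theorem mul_adjugate_succ (h : MarkoffRecurrence x) (hk : 1 ≤ k) :
    x (k + 2) * (x (k + 1)).adjugate = x k * Mmat k :=
  mul_adjugate_of_eq_mul (h.det _ (by lia)) (h.mul_succ k hk)

theorem mul_adjugate_self (h : MarkoffRecurrence x) (hk : 1 ≤ k) :
    x (k + 2) * (x k).adjugate = x (k + 1) * Mmat (k + 1) :=
  mul_adjugate_of_eq_mul (h.det k hk) (h.succ_mul k hk)

theorem mul_adjugate_succ_zero_one (h : MarkoffRecurrence x) (hk : 1 ≤ k) :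
    x (k + 2) 0 1 * x (k + 1) 0 0 - x (k + 2) 0 0 * x (k + 1) 0 1 = (-1) ^ k * x k 0 0 := by
  have entry := congrFun₂ (h.mul_adjugate_succ hk) 0 1
  simp only [Mmat, Matrix.adjugate_fin_two, Matrix.mul_apply, Fin.sum_univ_two, Matrix.of_apply,
    Matrix.cons_val] at entry
  linear_combination entry

theorem mul_adjugate_succ_one_zero (h : MarkoffRecurrence x) (hk : 1 ≤ k) :
    x (k + 2) 0 1 * x (k + 1) 1 1 - x (k + 2) 1 1 * x (k + 1) 0 1
      = 3 * x k 0 1 - (-1) ^ k * x k 1 1 := by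
  have entry := congrFun₂ (h.mul_adjugate_succ hk) 1 0
  simp only [Mmat, Matrix.adjugate_fin_two, Matrix.mul_apply, Fin.sum_univ_two, Matrix.of_apply,
    Matrix.cons_val, ← h.symm (k + 2) (by lia), ← h.symm (k + 1) (by lia), ← h.symm k hk,
    pow_succ] at entry
  linear_combination entry

theorem mul_adjugate_succ_one_one (h : MarkoffRecurrence x) (hk : 1 ≤ k) :
    x (k + 2) 1 1 * x (k + 1) 0 0 - x (k + 2) 0 1 * x (k + 1) 0 1 = (-1) ^ k * x k 0 1 := by
  have entry := congrFun₂ (h.mul_adjugate_succ hk) 1 1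
  simp only [Mmat, Matrix.adjugate_fin_two, Matrix.mul_apply, Fin.sum_univ_two, Matrix.of_apply,
    Matrix.cons_val, ← h.symm (k + 2) (by lia), ← h.symm (k + 1) (by lia), ← h.symm k hk]
    at entry
  linear_combination entry

theorem mul_adjugate_self_one_zero (h : MarkoffRecurrence x) (hk : 1 ≤ k) :
    x (k + 2) 0 1 * x k 1 1 - x (k + 2) 1 1 * x k 0 1
      = 3 * x (k + 1) 0 1 + (-1) ^ k * x (k + 1) 1 1 := by
  have entry := congrFun₂ (h.mul_adjugate_self hk) 1 0
  simp only [Mmat, Matrix.adjugate_fin_two, Matrix.mul_apply, Fin.sum_univ_two, Matrix.of_apply,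
    Matrix.cons_val, ← h.symm (k + 2) (by lia), ← h.symm (k + 1) (by lia), ← h.symm k hk,
    pow_succ] at entry
  linear_combination entry

theorem lower_mul_lower_sub (h : MarkoffRecurrence x) (k : ℕ) :
    x (k + 4) 1 1 * x (k + 5) 1 1 - x (k + 1) 1 1 * x (k + 2) 1 1 =
      3 * (x (k + 3) 1 1 * (x (k + 4) 0 1 ^ 2 - x (k + 2) 0 1 ^ 2) - 2 * x (k + 3) 1 1
        - 3 * x (k + 2) 0 1 * x (k + 4) 0 1 + 2 * (-1) ^ k * x (k + 2) 1 1 * x (k + 4) 0 1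
        - 3 * (-1) ^ k * x (k + 3) 0 1) := by
  have recur₂ := h.add_three_apply (k := k + 2) (by lia) 1 1
  have recur₁ := h.add_three_apply (k := k + 1) (by lia) 1 1
  have minor₁ := h.mul_adjugate_succ_one_zero (k := k + 2) (by lia)
  have minor₂ := h.mul_adjugate_succ_one_one (k := k + 2) (by lia)
  have minor₃ := h.mul_adjugate_self_one_zero (k := k + 2) (by lia)
  have det := h.upper_mul_lower (k := k + 2) (by lia)
  have sign := neg_one_pow_mul_self (R := ℤ) k
  simp only [pow_succ _ k, pow_succ _ (k + 1), add_assoc, Nat.reduceAdd] at *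
  linear_combination x (k + 4) 1 1 * recur₂ - x (k + 2) 1 1 * recur₁ - 3 * x (k + 4) 0 1 * minor₁
    + 3 * x (k + 4) 1 1 * minor₂ - 3 * (-1) ^ k * minor₃ - 3 * x (k + 3) 1 1 * (det + sign)

end MarkoffRecurrence

theorem mul_le_of_rpow_goldenRatio_le {c r s t : ℝ} (hc : 0 < c) (hr : 0 < r) (hs : 0 < s)
    (hrs : c * r ^ φ ≤ s) (hst : c * s ^ φ ≤ t) : c * c ^ (φ - 1) * (r * s) ≤ t := by
  have hφ : φ * (φ - 1) = 1 := by linear_combination Real.goldenRatio_sq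
  have hpow : c ^ (φ - 1) * r ≤ s ^ (φ - 1) := by
    calc c ^ (φ - 1) * r = (c * r ^ φ) ^ (φ - 1) := by
          rw [Real.mul_rpow hc.le (by positivity), ← Real.rpow_mul hr.le, hφ, Real.rpow_one]
      _ ≤ s ^ (φ - 1) :=
          Real.rpow_le_rpow (by positivity) hrs (sub_nonneg.2 Real.one_lt_goldenRatio.le)
  calc c * c ^ (φ - 1) * (r * s) = c * (c ^ (φ - 1) * r * s) := by ring
    _ ≤ c * (s ^ (φ - 1) * s) := by gcongr
    _ = c * s ^ φ := by rw [← Real.rpow_add_one hs.ne', sub_add_cancel]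
    _ ≤ t := hst

/-- The properties of a sequence of sizes `X_1 ≤ X_2 ≤ …` on which the calculus of `O(1 / X_k)`
rests, the essential one being `X_k * X_{k+1} = O(X_{k+2})`. -/
structure FibonacciGrowth (X : ℕ → ℝ) : Prop where
  pos : ∀ k, 1 ≤ k → 0 < X k
  monotoneOn : MonotoneOn X (Set.Ici 1)
  isBigO_mul : (fun k => X k * X (k + 1)) =O[𝓟 (Set.Ici 1)] fun k => X (k + 2)

theorem tendsto_add_principal_Ici (m n : ℕ) :
    Tendsto (fun k => k + n) (𝓟 (Set.Ici m)) (𝓟 (Set.Ici m)) :=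
  tendsto_principal_principal.2 fun _ hk => Set.mem_Ici.2 (le_add_right hk)

theorem FibonacciGrowth.isBigO_shift {X : ℕ → ℝ} (hX : FibonacciGrowth X) (n : ℕ) :
    X =O[𝓟 (Set.Ici 1)] fun k => X (k + n) := by
  refine .of_bound' (eventually_principal.2 fun k hk => ?_)
  have hkn : 1 ≤ k + n := le_add_right hk
  rw [Real.norm_of_nonneg (hX.pos k hk).le, Real.norm_of_nonneg (hX.pos _ hkn).le]
  exact hX.monotoneOn hk hkn (Nat.le_add_right k n)

/-- `f k = O(1 / X_k)`, uniformly over `k ≥ 1`. -/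
def IsSmall {E : Type*} [Norm E] (X : ℕ → ℝ) (f : ℕ → E) : Prop :=
  f =O[𝓟 (Set.Ici 1)] fun k => (X k)⁻¹

namespace IsSmall

variable {E : Type*} [SeminormedAddCommGroup E] {X : ℕ → ℝ} {f g : ℕ → E}

theorem congr (hf : IsSmall X f) (h : ∀ k, 1 ≤ k → g k = f k) : IsSmall X g :=
  IsBigO.congr' hf (eventually_principal.2 fun k hk => (h k hk).symm) EventuallyEq.rfl

theorem add (hf : IsSmall X f) (hg : IsSmall X g) : IsSmall X fun k => f k + g k :=
  IsBigO.add hf hg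

theorem sub (hf : IsSmall X f) (hg : IsSmall X g) : IsSmall X fun k => f k - g k :=
  IsBigO.sub hf hg

theorem zsmul (hf : IsSmall X f) (n : ℤ) : IsSmall X fun k => n • f k :=
  (isBigO_of_le' (c := ‖n‖) _ fun k => norm_zsmul_le n (f k)).trans hf

theorem sign_zsmul (hf : IsSmall X f) : IsSmall X fun k => (-1 : ℤ) ^ k • f k :=
  (isBigO_of_le _ fun k => by
    obtain h | h := neg_one_pow_eq_or ℤ k <;> simp [h]).trans hf

theorem shift (hX : FibonacciGrowth X) (hf : IsSmall X f) (n : ℕ) :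
    IsSmall X fun k => f (k + n) :=
  (hf.comp_tendsto (tendsto_add_principal_Ici 1 n)).trans <|
    (hX.isBigO_shift n).inv_rev <| eventually_principal.2 fun k hk h =>
      absurd h (hX.pos k hk).ne'

theorem eventually_norm_le (hX : FibonacciGrowth X) (hf : IsSmall X f) :
    ∀ᶠ c in atTop, ∀ k, 1 ≤ k → ‖f k‖ ≤ c / X k := by
  filter_upwards [isBigO_iff_eventually.1 hf] with c hc k hk
  have hXk := eventually_principal.1 hc k hk
  rwa [norm_inv, Real.norm_of_nonneg (hX.pos k hk).le, ← div_eq_mul_inv] at hXk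

theorem of_norm_le (hX : FibonacciGrowth X) {c : ℝ} (h : ∀ k, 1 ≤ k → ‖f k‖ ≤ c / X k) :
    IsSmall X f := by
  refine .of_bound c (eventually_principal.2 fun k hk => ?_)
  rw [norm_inv, Real.norm_of_nonneg (hX.pos k hk).le, ← div_eq_mul_inv]
  exact h k hk

theorem const_mul {f : ℕ → ℝ} (hf : IsSmall X f) (r : ℝ) : IsSmall X fun k => r * f k :=
  IsBigO.const_mul_left hf r

theorem sign_mul {f : ℕ → ℝ} (hf : IsSmall X f) : IsSmall X fun k => (-1) ^ k * f k :=
  hf.sign_zsmul.congr fun k _ => by simp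

theorem mul_shift_two {u f : ℕ → ℝ} (hX : FibonacciGrowth X)
    (hu : u =O[𝓟 (Set.Ici 1)] fun k => X (k + 1)) (hf : IsSmall X f) :
    IsSmall X fun k => u k * f (k + 2) := by
  have hinv : (fun k => (X (k + 2))⁻¹) =O[𝓟 (Set.Ici 1)] fun k => (X k * X (k + 1))⁻¹ :=
    hX.isBigO_mul.inv_rev <| eventually_principal.2 fun k hk h =>
      absurd h (mul_pos (hX.pos k hk) (hX.pos _ (le_add_right hk))).ne'
  have hf₂ : (fun k => f (k + 2)) =O[𝓟 (Set.Ici 1)] fun k => (X (k + 2))⁻¹ :=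
    hf.comp_tendsto (tendsto_add_principal_Ici 1 2)
  refine (hu.mul (hf₂.trans hinv)).congr' EventuallyEq.rfl
    (eventually_principal.2 fun k hk => ?_)
  have hne := (hX.pos (k + 1) (le_add_right hk)).ne'
  field_simp

end IsSmall

/-- `f k` is within `O(1 / X_k)` of an integer, uniformly over `k ≥ 1`. Smallness in `ℝ / ℤ` makes
this a property stable under addition. -/
def IsNearInt (X : ℕ → ℝ) (f : ℕ → ℝ) : Prop :=
  IsSmall X fun k => (f k : UnitAddCircle)

theorem IsSmall.isNearInt {X f : ℕ → ℝ} (h : IsSmall X f) : IsNearInt X f :=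
  (isBigO_of_le _ fun k => by
    simpa only [UnitAddCircle.norm_eq, Real.norm_eq_abs, Int.cast_zero, sub_zero]
      using round_le (f k) 0).trans h

namespace IsNearInt

variable {X f g : ℕ → ℝ}

theorem congr (hf : IsNearInt X f) (h : ∀ k, 1 ≤ k → g k = f k) : IsNearInt X g :=
  IsSmall.congr hf fun k hk => congrArg _ (h k hk)

theorem add (hf : IsNearInt X f) (hg : IsNearInt X g) : IsNearInt X fun k => f k + g k :=
  IsSmall.add hf hg

theorem sub (hf : IsNearInt X f) (hg : IsNearInt X g) : IsNearInt X fun k => f k - g k :=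
  IsSmall.sub hf hg

theorem intCast_mul (hf : IsNearInt X f) (n : ℤ) : IsNearInt X fun k => n * f k :=
  (IsSmall.zsmul hf n).congr fun k _ => by
    rw [← AddCircle.coe_zsmul, zsmul_eq_mul]

theorem sign_mul (hf : IsNearInt X f) : IsNearInt X fun k => (-1) ^ k * f k :=
  (IsSmall.sign_zsmul hf).congr fun k _ => by
    rw [← AddCircle.coe_zsmul, zsmul_eq_mul, Int.cast_pow, Int.cast_neg, Int.cast_one]

theorem shift (hX : FibonacciGrowth X) (hf : IsNearInt X f) (n : ℕ) :
    IsNearInt X fun k => f (k + n) :=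
  IsSmall.shift hX hf n

theorem intCast (X : ℕ → ℝ) (N : ℕ → ℤ) : IsNearInt X fun k => N k :=
  isBigO_of_le _ fun k => by
    rw [UnitAddCircle.norm_eq, round_intCast, sub_self, abs_zero]
    exact norm_nonneg _

theorem of_isSmall_sub (hg : IsNearInt X g) (h : IsSmall X fun k => f k - g k) :
    IsNearInt X f :=
  (hg.add h.isNearInt).congr fun k _ => (add_sub_cancel (g k) (f k)).symm

theorem eventually_distInt_le (hX : FibonacciGrowth X) (hf : IsNearInt X f) :
    ∀ᶠ c in atTop, ∀ k, 1 ≤ k → distInt (f k) ≤ c / X k := by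
  simpa only [UnitAddCircle.norm_eq, distInt] using hf.eventually_norm_le hX

end IsNearInt

/-- The linear form `x_{k,1} ξ - x_{k,2}`, one of the two that `MarkoffSeq` makes small. -/
def lowerForm (ξ : ℝ) (x : ℕ → Matrix (Fin 2) (Fin 2) ℤ) (k : ℕ) : ℝ :=
  x k 0 1 * ξ - x k 1 1

/-- The integer close to `(x_{k+3,0} + x_{k,0}) ξ ^ 3`. -/
def cubeApprox (x : ℕ → Matrix (Fin 2) (Fin 2) ℤ) (k : ℕ) : ℤ :=
  3 * (x (k + 1) 0 1 * x (k + 2) 1 1 + (-1) ^ k * x k 1 1)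

/-- The integer close to `(x_{k+6,0} - x_{k,0}) ξ ^ 4`. -/
def fourthApprox (x : ℕ → Matrix (Fin 2) (Fin 2) ℤ) (k : ℕ) : ℤ :=
  3 * (x (k + 4) 1 1 * x (k + 5) 1 1 - x (k + 1) 1 1 * x (k + 2) 1 1)
    - 9 * (x (k + 3) 1 1 - x k 1 1) - 6 * (-1) ^ k * cubeApprox x k

namespace MarkoffSeq

variable {ξ : ℝ} {x : ℕ → Matrix (Fin 2) (Fin 2) ℤ}

theorem recurrence (hx : MarkoffSeq ξ x) : MarkoffRecurrence x := by
  obtain ⟨hsymm, hdet, c₁, c₂, c₃, -, -, -, h⟩ := hx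
  exact ⟨hsymm, hdet, fun k hk => (h k hk).2.2.1.1, fun k hk => (h k hk).2.2.1.2⟩

theorem Xnorm_pos (hx : MarkoffSeq ξ x) {k : ℕ} (hk : 1 ≤ k) : 0 < Xnorm x k := by
  obtain ⟨-, -, c₁, c₂, c₃, -, -, -, h⟩ := hx
  have hupper : |(x k 0 0 : ℝ)| ≤ Xnorm x k := le_max_left _ _
  have hlt : Xnorm x k < (1 + ξ ^ 2) * |(x k 0 0 : ℝ)| := (h k hk).2.2.2.2
  have hpos : 0 < (1 + ξ ^ 2) * |(x k 0 0 : ℝ)| := ((abs_nonneg _).trans hupper).trans_lt hlt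
  exact (pos_of_mul_pos_right hpos (by positivity)).trans_le hupper

theorem fibonacciGrowth (hx : MarkoffSeq ξ x) : FibonacciGrowth (Xnorm x) := by
  have hpos := fun k hk => hx.Xnorm_pos (k := k) hk
  obtain ⟨-, -, c₁, c₂, c₃, hc₁, -, -, h⟩ := hx
  have hgrowth : ∀ k, 1 ≤ k → c₁ * Xnorm x k ^ φ ≤ Xnorm x (k + 1) := fun k hk => (h k hk).1.1
  refine ⟨hpos, monotoneOn_nat_Ici_of_le_succ fun k hk => (h k hk).2.2.2.1.le,
    .of_bound (c₁ * c₁ ^ (φ - 1))⁻¹ <| eventually_principal.2 fun k (hk : 1 ≤ k) => ?_⟩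
  have h₀ := hpos k hk
  have h₁ := hpos (k + 1) (by lia)
  have h₂ := hpos (k + 2) (by lia)
  rw [Real.norm_of_nonneg (by positivity), Real.norm_of_nonneg h₂.le,
    le_inv_mul_iff₀ (by positivity)]
  exact mul_le_of_rpow_goldenRatio_le hc₁ h₀ h₁ (hgrowth k hk) (hgrowth (k + 1) (by lia))

theorem isBigO_apply (hx : MarkoffSeq ξ x) (i j : Fin 2) :
    (fun k => (x k i j : ℝ)) =O[𝓟 (Set.Ici 1)] Xnorm x := by
  refine .of_norm_eventuallyLE (eventually_principal.2 fun k hk => ?_)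
  have hsymm := hx.recurrence.symm k hk
  fin_cases i <;> fin_cases j <;> simp [Xnorm, ← hsymm]

theorem isSmall_apply_mul (hx : MarkoffSeq ξ x) (i j : Fin 2) {f : ℕ → ℝ}
    (hf : IsSmall (Xnorm x) f) : IsSmall (Xnorm x) fun k => x k i j * f (k + 2) :=
  hf.mul_shift_two hx.fibonacciGrowth
    ((hx.isBigO_apply i j).trans (hx.fibonacciGrowth.isBigO_shift 1))

theorem isSmall_apply_succ_mul (hx : MarkoffSeq ξ x) (i j : Fin 2) {f : ℕ → ℝ}
    (hf : IsSmall (Xnorm x) f) : IsSmall (Xnorm x) fun k => x (k + 1) i j * f (k + 2) :=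
  hf.mul_shift_two hx.fibonacciGrowth
    ((hx.isBigO_apply i j).comp_tendsto (tendsto_add_principal_Ici 1 1))

theorem isSmall_upper_mul_sub (hx : MarkoffSeq ξ x) :
    IsSmall (Xnorm x) fun k => x k 0 0 * ξ - x k 0 1 := by
  have hX := hx.fibonacciGrowth
  obtain ⟨-, -, c₁, c₂, c₃, -, -, -, h⟩ := hx
  exact .of_norm_le hX fun k hk => (h k hk).2.1.1

theorem isSmall_lowerForm (hx : MarkoffSeq ξ x) : IsSmall (Xnorm x) (lowerForm ξ x) := by
  have hX := hx.fibonacciGrowth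
  obtain ⟨-, -, c₁, c₂, c₃, -, -, -, h⟩ := hx
  exact .of_norm_le hX fun k hk => (h k hk).2.1.2

theorem isSmall_upper_mul_sq_sub (hx : MarkoffSeq ξ x) :
    IsSmall (Xnorm x) fun k => x k 0 0 * ξ ^ 2 - x k 1 1 :=
  ((hx.isSmall_upper_mul_sub.const_mul ξ).add hx.isSmall_lowerForm).congr fun k _ => by
    rw [lowerForm]
    ring

theorem isSmall_lower_add_mul_sub (hx : MarkoffSeq ξ x) :
    IsSmall (Xnorm x) fun k => (x (k + 3) 1 1 + x k 1 1) * ξ - cubeApprox x k := by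
  have hL := hx.isSmall_lowerForm
  refine (((hx.isSmall_apply_succ_mul 0 1 hL).const_mul 3).add (hL.sign_mul.const_mul 3)).congr
    fun k hk => ?_
  have recur := hx.recurrence.add_three_apply hk 1 1
  have minor := hx.recurrence.mul_adjugate_succ_one_one hk
  rify at recur minor
  simp only [lowerForm, cubeApprox]
  push_cast
  linear_combination ξ * recur + 3 * ξ * minor

theorem isSmall_add_mul_cube_sub (hx : MarkoffSeq ξ x) :
    IsSmall (Xnorm x) fun k => (x (k + 3) 0 0 + x k 0 0) * ξ ^ 3 - cubeApprox x k := by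
  have hsq := hx.isSmall_upper_mul_sq_sub
  refine ((((hsq.shift hx.fibonacciGrowth 3).add hsq).const_mul ξ).add
    hx.isSmall_lower_add_mul_sub).congr fun k _ => ?_
  ring

theorem isSmall_cubeApprox_mul_sub (hx : MarkoffSeq ξ x) :
    IsSmall (Xnorm x) fun k => cubeApprox x k * ξ - 6 * ((-1) ^ k * x k 1 1 * ξ)
      - (3 * (x (k + 1) 1 1 * x (k + 2) 1 1) - 9 * x k 1 1 : ℤ) := by
  have hL := hx.isSmall_lowerForm
  refine (((hx.isSmall_apply_succ_mul 1 1 hL).const_mul 3).sub (hL.const_mul 9)).congr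
    fun k hk => ?_
  have minor := hx.recurrence.mul_adjugate_succ_one_zero hk
  rify at minor
  simp only [lowerForm, cubeApprox]
  push_cast
  linear_combination -3 * ξ * minor

theorem isSmall_sub_mul_fourth_sub (hx : MarkoffSeq ξ x) :
    IsSmall (Xnorm x) fun k => (x (k + 6) 0 0 - x k 0 0) * ξ ^ 4 - fourthApprox x k := by
  have hX := hx.fibonacciGrowth
  have hcube := hx.isSmall_add_mul_cube_sub
  have hfourth := hx.isSmall_cubeApprox_mul_sub
  refine (((((hcube.shift hX 3).sub hcube).const_mul ξ).add ((hfourth.shift hX 3).sub hfourth)).sub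
    (hx.isSmall_lower_add_mul_sub.sign_mul.const_mul 6)).congr fun k _ => ?_
  simp only [add_assoc, Nat.reduceAdd, fourthApprox]
  push_cast
  ring

theorem lowerForm_add_three (hx : MarkoffSeq ξ x) {k : ℕ} (hk : 1 ≤ k) :
    lowerForm ξ x (k + 3) + lowerForm ξ x k = 3 * x (k + 1) 0 0 * lowerForm ξ x (k + 2) := by
  have recur_middle := hx.recurrence.add_three_apply hk 0 1
  have recur_lower := hx.recurrence.add_three_apply hk 1 1
  rify at recur_middle recur_lower
  unfold lowerForm
  linear_combination ξ * recur_middle - recur_lower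

theorem middle_mul_lowerForm_sub (hx : MarkoffSeq ξ x) {k : ℕ} (hk : 1 ≤ k) :
    x (k + 3) 0 1 * lowerForm ξ x (k + 3) - x (k + 1) 0 1 * lowerForm ξ x (k + 1) =
      x (k + 1) 0 1 * lowerForm ξ x (k + 4)
        - (x k 0 1 - 3 * (-1) ^ k * x k 0 0) * lowerForm ξ x (k + 3) := by
  have recur_form := hx.lowerForm_add_three (k := k + 1) (by lia)
  have recur := hx.recurrence.add_three_apply hk 0 1
  have minor := hx.recurrence.mul_adjugate_succ_zero_one hk
  rify at recur minor
  simp only [add_assoc, Nat.reduceAdd] at recur_form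
  linear_combination -x (k + 1) 0 1 * recur_form + lowerForm ξ x (k + 3) * (recur + 3 * minor)

/- Each square alone is too large to be controlled: only the difference of the two makes
`x_{k+3,2} (x_{k+4,1} L_{k+4} - x_{k+2,1} L_{k+2})` small, where `L` is `lowerForm`. -/
theorem isNearInt_lower_mul_sq_sub_sq_mul (hx : MarkoffSeq ξ x) :
    IsNearInt (Xnorm x) fun k => x (k + 3) 1 1 * (x (k + 4) 0 1 ^ 2 - x (k + 2) 0 1 ^ 2) * ξ := by
  have hL := hx.isSmall_lowerForm
  have hsucc := hx.isSmall_apply_succ_mul 1 1 hL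
  have hself := hx.isSmall_apply_mul 1 1 hL
  refine .of_isSmall_sub (.intCast _ fun k =>
    x (k + 3) 1 1 * (x (k + 4) 0 1 * x (k + 4) 1 1 - x (k + 2) 0 1 * x (k + 2) 1 1)) ?_
  refine (((hx.isSmall_apply_succ_mul 0 1 hself).shift hx.fibonacciGrowth 1).sub
    ((hx.isSmall_apply_succ_mul 0 1 hsucc).add
      ((hx.isSmall_apply_succ_mul 0 0 hsucc).sign_mul.const_mul 3))).congr fun k _ => ?_
  have key := hx.middle_mul_lowerForm_sub (k := k + 1) (by lia)
  simp only [pow_succ, add_assoc, Nat.reduceAdd, lowerForm] at key ⊢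
  push_cast
  linear_combination x (k + 3) 1 1 * key

theorem isNearInt_middle_mul (hx : MarkoffSeq ξ x) :
    IsNearInt (Xnorm x) fun k => x k 0 1 * ξ :=
  .of_isSmall_sub (.intCast _ fun k => x k 1 1) hx.isSmall_lowerForm

theorem isNearInt_apply_mul_middle_mul (hx : MarkoffSeq ξ x) (i j : Fin 2) :
    IsNearInt (Xnorm x) fun k => x k i j * x (k + 2) 0 1 * ξ :=
  .of_isSmall_sub (.intCast _ fun k => x k i j * x (k + 2) 1 1) <|
    (hx.isSmall_apply_mul i j hx.isSmall_lowerForm).congr fun k _ => by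
      rw [lowerForm]
      push_cast
      ring

theorem isNearInt_lower_mul_lower_sub_mul (hx : MarkoffSeq ξ x) :
    IsNearInt (Xnorm x) fun k => (x (k + 4) 1 1 * x (k + 5) 1 1 - x (k + 1) 1 1 * x (k + 2) 1 1
      + 6 * x (k + 3) 1 1) * ξ := by
  have hX := hx.fibonacciGrowth
  have hmiddle := hx.isNearInt_middle_mul.shift hX 3
  have hmiddle_mul := (hx.isNearInt_apply_mul_middle_mul 0 1).shift hX 2
  have hlower_mul := (hx.isNearInt_apply_mul_middle_mul 1 1).shift hX 2
  refine ((((hx.isNearInt_lower_mul_sq_sub_sq_mul.intCast_mul 3).sub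
    (hmiddle_mul.intCast_mul 9)).add (hlower_mul.sign_mul.intCast_mul 6)).sub
    (hmiddle.sign_mul.intCast_mul 9)).congr fun k _ => ?_
  have key := hx.recurrence.lower_mul_lower_sub k
  rify at key
  simp only [add_assoc, Nat.reduceAdd]
  push_cast
  linear_combination ξ * key

theorem isNearInt_fourthApprox_mul (hx : MarkoffSeq ξ x) :
    IsNearInt (Xnorm x) fun k => fourthApprox x k * ξ := by
  have hlower : IsNearInt (Xnorm x) fun k => (x (k + 3) 1 1 + x k 1 1) * ξ :=
    .of_isSmall_sub (.intCast _ _) hx.isSmall_lower_add_mul_sub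
  have hcube : IsNearInt (Xnorm x) fun k => cubeApprox x k * ξ - 6 * ((-1) ^ k * x k 1 1 * ξ) :=
    .of_isSmall_sub (.intCast _ _) hx.isSmall_cubeApprox_mul_sub
  refine (((hx.isNearInt_lower_mul_lower_sub_mul.intCast_mul 3).sub (hlower.intCast_mul 27)).sub
    (hcube.sign_mul.intCast_mul 6)).congr fun k _ => ?_
  rw [fourthApprox]
  push_cast
  linear_combination -36 * x k 1 1 * ξ * neg_one_pow_mul_self (R := ℝ) k

theorem isNearInt_upper_mul_pow (hx : MarkoffSeq ξ x) {j : ℕ} (hj : j ≤ 2) :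
    IsNearInt (Xnorm x) fun k => x k 0 0 * ξ ^ j := by
  interval_cases j
  · simpa only [pow_zero, mul_one] using .intCast _ fun k => x k 0 0
  · simpa only [pow_one] using .of_isSmall_sub (.intCast _ _) hx.isSmall_upper_mul_sub
  · exact .of_isSmall_sub (.intCast _ _) hx.isSmall_upper_mul_sq_sub

theorem isNearInt_add_mul_pow (hx : MarkoffSeq ξ x) {j : ℕ} (hj : j ≤ 3) :
    IsNearInt (Xnorm x) fun k => ((x (k + 3) 0 0 + x k 0 0 : ℤ) : ℝ) * ξ ^ j := by
  push_cast
  obtain hj | rfl : j ≤ 2 ∨ j = 3 := by lia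
  · have hpow := hx.isNearInt_upper_mul_pow hj
    exact ((hpow.shift hx.fibonacciGrowth 3).add hpow).congr fun k _ => add_mul _ _ _
  · exact .of_isSmall_sub (.intCast _ _) hx.isSmall_add_mul_cube_sub

theorem isNearInt_sub_mul_pow (hx : MarkoffSeq ξ x) {j : ℕ} (hj : j ≤ 5) :
    IsNearInt (Xnorm x) fun k => ((x (k + 6) 0 0 - x k 0 0 : ℤ) : ℝ) * ξ ^ j := by
  push_cast
  obtain hj | rfl | rfl : j ≤ 3 ∨ j = 4 ∨ j = 5 := by lia
  · have hpow := hx.isNearInt_add_mul_pow hj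
    refine ((hpow.shift hx.fibonacciGrowth 3).sub hpow).congr fun k _ => ?_
    push_cast
    ring
  · exact .of_isSmall_sub (.intCast _ _) hx.isSmall_sub_mul_fourth_sub
  · refine .of_isSmall_sub hx.isNearInt_fourthApprox_mul
      ((hx.isSmall_sub_mul_fourth_sub.const_mul ξ).congr fun k _ => ?_)
    ring

end MarkoffSeq

theorem stmt8 (ξ : ℝ) (x : ℕ → Matrix (Fin 2) (Fin 2) ℤ) (hx : MarkoffSeq ξ x) :
    ∃ c : ℝ, 0 < c ∧ ∀ k, 1 ≤ k →
      (∀ j ≤ 3, distInt (((x (k+3) 0 0 + x k 0 0 : ℤ) : ℝ) * ξ^j) ≤ c / Xnorm x k) ∧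
      (∀ j ≤ 5, distInt (((x (k+6) 0 0 - x k 0 0 : ℤ) : ℝ) * ξ^j) ≤ c / Xnorm x k) := by
  have hadd := (eventually_all_finite (Set.finite_Iic 3)).2 fun j hj =>
    (hx.isNearInt_add_mul_pow hj).eventually_distInt_le hx.fibonacciGrowth
  have hsub := (eventually_all_finite (Set.finite_Iic 5)).2 fun j hj =>
    (hx.isNearInt_sub_mul_pow hj).eventually_distInt_le hx.fibonacciGrowth
  obtain ⟨c, hc, hcadd, hcsub⟩ := ((eventually_gt_atTop 0).and (hadd.and hsub)).exists
  exact ⟨c, hc, fun k hk => ⟨fun j hj => hcadd j hj k hk, fun j hj => hcsub j hj k hk⟩⟩
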